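/- Let K be any field, and let G_34 ⊆ S_8 be the subgroup of order 96 generated by (1,2)(3,4), φ̃_1 = (2,3,4)(6,7,8), and κ̃ = (1,5)(2,6)(3,8)(4,7). Then the fixed field K(x_1,…,x_8)^{G_34} is K-rational. -/

import Mathlib

noncomputable section

/-- The rational function field `K(x_i : i ∈ I)` over `K`, realized as the fraction field
of the multivariate polynomial ring. -/
abbrev RFF (K : Type) [Field K] (I : Type) := FractionRing (MvPolynomial I K)

/-- The image of the variable `x_i` in the rational function field `K(x_i : i ∈ I)`. -/
noncomputable def Xvar (K : Type) [Field K] (I : Type) (i : I) : RFF K I :=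
  algebraMap (MvPolynomial I K) (RFF K I) (MvPolynomial.X i)

/-- Permutations of the variables as `K`-algebra automorphisms of the polynomial ring. -/
def renameHom (K : Type) [Field K] (I : Type) :
    Equiv.Perm I →* (MvPolynomial I K ≃ₐ[K] MvPolynomial I K) where
  toFun σ := MvPolynomial.renameEquiv K σ
  map_one' := MvPolynomial.renameEquiv_refl K
  map_mul' σ τ := (MvPolynomial.renameEquiv_trans K τ σ).symm

/-- The action of permutations of the variables on `K(x_i : i ∈ I)` by `K`-automorphisms,
determined by `σ(x_i) = x_{σ(i)}`. -/
noncomputable def permHom (K : Type) [Field K] (I : Type) :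
    Equiv.Perm I →* (RFF K I ≃ₐ[K] RFF K I) :=
  (IsFractionRing.fieldEquivOfAlgEquivHom K (RFF K I)).comp (renameHom K I)

/-- The fixed field `K(x_i : i ∈ I)^G` of a group `G` of permutations of the variables. -/
noncomputable def fixedSub (K : Type) [Field K] (I : Type) (G : Subgroup (Equiv.Perm I)) :
    IntermediateField K (RFF K I) :=
  IntermediateField.fixedField (G.map (permHom K I))

/-- An extension `L/K` is `K`-rational if it is purely transcendental over `K`, i.e. generated
by finitely many algebraically independent elements. -/
def IsRatExt (K : Type) [Field K] (L : Type*) [Field L] [Algebra K L] : Prop :=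
  ∃ (n : ℕ) (t : Fin n → L), AlgebraicIndependent K t ∧
    IntermediateField.adjoin K (Set.range t) = ⊤


/-! ### Degree bookkeeping -/

/-- `L` has finite degree at most `m` over the intermediate field `F`. -/
def DegLE {K L : Type} [Field K] [Field L] [Algebra K L] (F : IntermediateField K L) (m : ℕ) :
    Prop :=
  FiniteDimensional F L ∧ Module.finrank F L ≤ m

lemma degLE_step {K L : Type} [Field K] [Field L] [Algebra K L] (F : IntermediateField K L)
    (a : L) (p : Polynomial F) (n m : ℕ) (hp : p.Monic) (hn : p.natDegree = n)
    (ha : Polynomial.aeval a p = 0)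
    (h : ∀ E : IntermediateField K L, F ≤ E → a ∈ E → DegLE E m) : DegLE F (n * m) := by
  have hInt : IsIntegral F a := ⟨p, hp, by simpa [Polynomial.aeval_def] using ha⟩
  obtain ⟨h1, h2⟩ := h ((IntermediateField.adjoin F {a}).restrictScalars K)
    (fun x hx => (IntermediateField.adjoin F {a}).algebraMap_mem ⟨x, hx⟩)
    (IntermediateField.mem_adjoin_simple_self F a)
  have h1' : FiniteDimensional (IntermediateField.adjoin F {a}) L := h1
  have h2' : Module.finrank (IntermediateField.adjoin F {a}) L ≤ m := h2
  have h3 : FiniteDimensional F (IntermediateField.adjoin F {a}) :=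
    IntermediateField.adjoin.finiteDimensional hInt
  have h4 : Module.finrank F (IntermediateField.adjoin F {a}) ≤ n := by
    rw [IntermediateField.adjoin.finrank hInt, ← hn]
    exact Polynomial.natDegree_le_natDegree (minpoly.min F a hp ha)
  refine ⟨FiniteDimensional.trans F (IntermediateField.adjoin F {a}) L, ?_⟩
  have h5 : Module.Free F (IntermediateField.adjoin F {a}) := Module.Free.of_divisionRing _ _
  have h6 : Module.Free (IntermediateField.adjoin F {a}) L := Module.Free.of_divisionRing _ _
  rw [← Module.finrank_mul_finrank F (IntermediateField.adjoin F {a}) L]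
  exact Nat.mul_le_mul h4 h2'

lemma degLE_top {K L : Type} [Field K] [Field L] [Algebra K L] (F : IntermediateField K L)
    (h : F = ⊤) : DegLE F 1 := by
  subst h
  have : Module.finrank (⊤ : IntermediateField K L) L = 1 := IntermediateField.finrank_top
  exact ⟨Module.finite_of_finrank_pos (by omega), this.le⟩

open Polynomial in
lemma degLE_two {K L : Type} [Field K] [Field L] [Algebra K L] (F : IntermediateField K L)
    (a b c : L) (m : ℕ) (hb : b ∈ F) (hc : c ∈ F) (h0 : a ^ 2 + b * a + c = 0)
    (h : ∀ E : IntermediateField K L, F ≤ E → a ∈ E → DegLE E m) : DegLE F (2 * m) := by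
  refine degLE_step F a (X ^ 2 + C ⟨b, hb⟩ * X + C ⟨c, hc⟩) 2 m (by monicity!) (by compute_degree!) ?_ h
  simpa [IntermediateField.algebraMap_apply] using h0

open Polynomial in
lemma degLE_three {K L : Type} [Field K] [Field L] [Algebra K L] (F : IntermediateField K L)
    (a b c d : L) (m : ℕ) (hb : b ∈ F) (hc : c ∈ F) (hd : d ∈ F)
    (h0 : a ^ 3 + b * a ^ 2 + c * a + d = 0)
    (h : ∀ E : IntermediateField K L, F ≤ E → a ∈ E → DegLE E m) : DegLE F (3 * m) := by
  refine degLE_step F a (X ^ 3 + C ⟨b, hb⟩ * X ^ 2 + C ⟨c, hc⟩ * X + C ⟨d, hd⟩) 3 m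
    (by monicity!) (by compute_degree!) ?_ h
  simpa [IntermediateField.algebraMap_apply] using h0

open Polynomial in
lemma degLE_four {K L : Type} [Field K] [Field L] [Algebra K L] (F : IntermediateField K L)
    (a b c d e : L) (m : ℕ) (hb : b ∈ F) (hc : c ∈ F) (hd : d ∈ F) (he : e ∈ F)
    (h0 : a ^ 4 + b * a ^ 3 + c * a ^ 2 + d * a + e = 0)
    (h : ∀ E : IntermediateField K L, F ≤ E → a ∈ E → DegLE E m) : DegLE F (4 * m) := by
  refine degLE_step F a (X ^ 4 + C ⟨b, hb⟩ * X ^ 3 + C ⟨c, hc⟩ * X ^ 2 + C ⟨d, hd⟩ * X + C ⟨e, he⟩)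
    4 m (by monicity!) (by compute_degree!) ?_ h
  simpa [IntermediateField.algebraMap_apply] using h0

/-! ### The four-group invariants of one block -/

/-- The basic invariant of the Klein four group. -/
def vf {L : Type} [Field L] (a b c d : L) : L := (a * b - c * d) / (a + b - c - d)

lemma vf_left {L : Type} [Field L] (a b c d : L) : vf a b c d = vf b a c d := by
  unfold vf; congr 1 <;> ring

lemma vf_right {L : Type} [Field L] (a b c d : L) : vf a b c d = vf a b d c := by
  unfold vf; congr 1 <;> ring

lemma vf_swap {L : Type} [Field L] (a b c d : L) : vf a b c d = vf c d a b := by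
  unfold vf; rw [← neg_div_neg_eq]; congr 1 <;> ring

lemma vf_mob {L : Type} [Field L] (a b c d : L) (h1 : a + b - c - d ≠ 0)
    (h2 : a + c - b - d ≠ 0) (h3 : a + d - b - c ≠ 0) :
    b * (a - vf a b c d) = vf a b c d * a -
      (vf a b c d * vf a c b d + vf a b c d * vf a d b c - vf a c b d * vf a d b c) := by
  unfold vf
  field_simp
  ring

lemma vf_ne {L : Type} [Field L] (a b c d : L) (h1 : a + b - c - d ≠ 0)
    (h2 : a + c - b - d ≠ 0) (h3 : a + d - b - c ≠ 0) (hab : a ≠ b) (hcd : c ≠ d) :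
    vf a c b d ≠ vf a d b c := by
  unfold vf
  intro h
  rw [div_eq_div_iff h2 h3] at h
  have : (a - b) * (c - d) * (a + b - c - d) = 0 := by linear_combination h
  simp [sub_ne_zero.2 hab, sub_ne_zero.2 hcd, h1] at this

lemma sub_vf_ne {L : Type} [Field L] (a b c d : L) (h1 : a + b - c - d ≠ 0)
    (hac : a ≠ c) (had : a ≠ d) : a - vf a b c d ≠ 0 := by
  unfold vf
  intro h
  rw [sub_eq_zero, eq_div_iff h1] at h
  have : (a - c) * (a - d) = 0 := by linear_combination h
  simp [sub_ne_zero.2 hac, sub_ne_zero.2 had] at this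

/-- Adjoining one variable of a block to the field of block invariants has degree at most four
and yields all variables of the block. -/
lemma block_step {K L : Type} [Field K] [Field L] [Algebra K L] (F : IntermediateField K L)
    (a b c d : L) (h1 : a + b - c - d ≠ 0)
    (h2 : a + c - b - d ≠ 0) (h3 : a + d - b - c ≠ 0) (hab : a ≠ b) (hac : a ≠ c) (had : a ≠ d)
    (hs : a + b + c + d ∈ F) (hv1 : vf a b c d ∈ F) (hv2 : vf a c b d ∈ F)
    (hv3 : vf a d b c ∈ F) (m : ℕ)
    (h : ∀ E : IntermediateField K L, F ≤ E → a ∈ E → b ∈ E → c ∈ E → d ∈ E → DegLE E m) :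
    DegLE F (4 * m) := by
  have n1 := sub_vf_ne a b c d h1 hac had
  have n2 := sub_vf_ne a c b d h2 hab had
  have n3 := sub_vf_ne a d b c h3 hab hac
  have m1 := vf_mob a b c d h1 h2 h3
  have m2 := vf_mob a c b d h2 h1 (by intro h'; apply h3; linear_combination h')
  have m3 := vf_mob a d b c h3 (by intro h'; apply h1; linear_combination h')
    (by intro h'; apply h2; linear_combination h')
  rw [vf_right a d c b] at m2
  rw [vf_right a b d c, vf_right a c d b] at m3
  generalize vf a b c d = v1 at *
  generalize vf a c b d = v2 at *
  generalize vf a d b c = v3 at *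
  generalize hS : a + b + c + d = s at *
  refine degLE_four F a (-s)
    (v1 * v2 + v1 * v3 + v2 * v3 + s * (v1 + v2 + v3)
      - (v1 * v2 + v1 * v3 + v2 * v3) - (v1 * v2 + v1 * v3 + v2 * v3)
      - ((v1 * v2 + v1 * v3 - v2 * v3) + (v2 * v1 + v2 * v3 - v1 * v3)
        + (v3 * v1 + v3 * v2 - v1 * v2)))
    (-(v1 * v2 * v3) - s * (v1 * v2 + v1 * v3 + v2 * v3)
      + (v1 * v2 * v3 + v1 * v2 * v3 + v1 * v2 * v3)
      + ((v1 * v2 + v1 * v3 - v2 * v3) * (v2 + v3) + (v2 * v1 + v2 * v3 - v1 * v3) * (v1 + v3)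
        + (v3 * v1 + v3 * v2 - v1 * v2) * (v1 + v2)))
    (s * (v1 * v2 * v3)
      - ((v1 * v2 + v1 * v3 - v2 * v3) * (v2 * v3) + (v2 * v1 + v2 * v3 - v1 * v3) * (v1 * v3)
        + (v3 * v1 + v3 * v2 - v1 * v2) * (v1 * v2))) m ?_ ?_ ?_ ?_ ?_ ?_
  iterate 4
    repeat first
      | assumption | apply add_mem | apply sub_mem | apply mul_mem | apply neg_mem
  · linear_combination (-1) * (a - v2) * (a - v3) * m1 - (a - v1) * (a - v3) * m2
      - (a - v1) * (a - v2) * m3 + (a - v1) * (a - v2) * (a - v3) * hS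
  · intro E hFE ha
    have g1 := hFE hv1
    have g2 := hFE hv2
    have g3 := hFE hv3
    refine h E hFE ha ?_ ?_ ?_
    · rw [eq_div_of_mul_eq n1 m1]
      repeat first
        | assumption | apply div_mem | apply add_mem | apply sub_mem | apply mul_mem
    · rw [eq_div_of_mul_eq n2 m2]
      repeat first
        | assumption | apply div_mem | apply add_mem | apply sub_mem | apply mul_mem
    · rw [eq_div_of_mul_eq n3 m3]
      repeat first
        | assumption | apply div_mem | apply add_mem | apply sub_mem | apply mul_mem

/-! ### The invariants of the quotient `S₃` -/

/-- Invariants of the residual `S₃`-action, which permutes its eight arguments. -/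
def tS {L : Type} [Field L] (a1 a2 a3 b1 b2 b3 s s' : L) : Fin 8 → L :=
  let z1 := a1 + b1
  let z2 := a2 + b2
  let z3 := a3 + b3
  ![z1 + z2 + z3, z1 * z2 + z1 * z3 + z2 * z3, z1 * z2 * z3,
    (z2 * a1 + z3 * b1) + (z3 * a2 + z1 * b2) + (z1 * a3 + z2 * b3),
    z1 * (z2 * a1 + z3 * b1) + z2 * (z3 * a2 + z1 * b2) + z3 * (z1 * a3 + z2 * b3),
    z1 ^ 2 * (z2 * a1 + z3 * b1) + z2 ^ 2 * (z3 * a2 + z1 * b2) + z3 ^ 2 * (z1 * a3 + z2 * b3),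
    s + s',
    (z1 ^ 2 * z2 + z2 ^ 2 * z3 + z3 ^ 2 * z1) * s + (z1 ^ 2 * z3 + z3 ^ 2 * z2 + z2 ^ 2 * z1) * s']

lemma tS_cyc {L : Type} [Field L] (a1 a2 a3 b1 b2 b3 s s' : L) :
    tS a2 a3 a1 b2 b3 b1 s s' = tS a1 a2 a3 b1 b2 b3 s s' := by
  funext i
  fin_cases i <;> simp [tS] <;> ring

lemma tS_flip {L : Type} [Field L] (a1 a2 a3 b1 b2 b3 s s' : L) :
    tS b1 b3 b2 a1 a3 a2 s' s = tS a1 a2 a3 b1 b2 b3 s s' := by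
  funext i
  fin_cases i <;> simp [tS] <;> ring

/-- The residual step: the invariants generate a field over which the eight quantities have
degree at most six. -/
lemma tS_step {K L : Type} [Field K] [Field L] [Algebra K L] (F : IntermediateField K L)
    (a1 a2 a3 b1 b2 b3 s s' : L) (hF : ∀ i, tS a1 a2 a3 b1 b2 b3 s s' i ∈ F)
    (h12 : a1 + b1 ≠ a2 + b2) (h13 : a1 + b1 ≠ a3 + b3) (h23 : a2 + b2 ≠ a3 + b3) (m : ℕ)
    (h : ∀ E : IntermediateField K L, F ≤ E → a1 ∈ E → a2 ∈ E → a3 ∈ E → b1 ∈ E → b2 ∈ E →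
      b3 ∈ E → s ∈ E → s' ∈ E → DegLE E m) : DegLE F (3 * (2 * m)) := by
  have t0 := hF 0
  have t1 := hF 1
  have t2 := hF 2
  have t3 := hF 3
  have t4 := hF 4
  have t5 := hF 5
  have t6 := hF 6
  have t7 := hF 7
  simp only [tS, Matrix.cons_val] at t0 t1 t2 t3 t4 t5 t6 t7
  obtain ⟨z1, hz1⟩ : ∃ z, z = a1 + b1 := ⟨_, rfl⟩
  obtain ⟨z2, hz2⟩ : ∃ z, z = a2 + b2 := ⟨_, rfl⟩
  obtain ⟨z3, hz3⟩ : ∃ z, z = a3 + b3 := ⟨_, rfl⟩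
  simp only [← hz1, ← hz2, ← hz3] at t0 t1 t2 t3 t4 t5 t6 t7 h12 h13 h23
  obtain ⟨e1, he1⟩ : ∃ z, z = z1 + z2 + z3 := ⟨_, rfl⟩
  obtain ⟨e2, he2⟩ : ∃ z, z = z1 * z2 + z1 * z3 + z2 * z3 := ⟨_, rfl⟩
  obtain ⟨e3, he3⟩ : ∃ z, z = z1 * z2 * z3 := ⟨_, rfl⟩
  rw [← he1] at t0
  rw [← he2] at t1
  rw [← he3] at t2
  generalize hp0 : z2 * a1 + z3 * b1 + (z3 * a2 + z1 * b2) + (z1 * a3 + z2 * b3) = p0 at t3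
  generalize hp1 : z1 * (z2 * a1 + z3 * b1) + z2 * (z3 * a2 + z1 * b2)
    + z3 * (z1 * a3 + z2 * b3) = p1 at t4
  generalize hp2 : z1 ^ 2 * (z2 * a1 + z3 * b1) + z2 ^ 2 * (z3 * a2 + z1 * b2)
    + z3 ^ 2 * (z1 * a3 + z2 * b3) = p2 at t5
  generalize hq0 : s + s' = q0 at t6
  generalize hq1 : (z1 ^ 2 * z2 + z2 ^ 2 * z3 + z3 ^ 2 * z1) * s
    + (z1 ^ 2 * z3 + z3 ^ 2 * z2 + z2 ^ 2 * z1) * s' = q1 at t7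
  refine degLE_three F z1 (-e1) e2 (-e3) _ (neg_mem t0) t1 (neg_mem t2) ?_ ?_
  · rw [he1, he2, he3]; ring
  intro E hFE hE1
  have u0 := hFE t0
  have u1 := hFE t1
  refine degLE_two E z2 (z1 - e1) (e2 - z1 * (e1 - z1)) _ (sub_mem hE1 u0)
    (sub_mem u1 (mul_mem hE1 (sub_mem u0 hE1))) ?_ ?_
  · rw [he1, he2]; ring
  intro E' hEE hE2
  replace hE1 := hEE hE1
  replace hFE := hFE.trans hEE
  have hE3 : z3 ∈ E' := by
    have : z3 = e1 - z1 - z2 := by rw [he1]; ring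
    rw [this]
    exact sub_mem (sub_mem (hFE t0) hE1) hE2
  replace t3 := hFE t3
  replace t4 := hFE t4
  replace t5 := hFE t5
  replace t6 := hFE t6
  replace t7 := hFE t7
  have d12 := sub_ne_zero.2 h12
  have d13 := sub_ne_zero.2 h13
  have d23 := sub_ne_zero.2 h23
  have hb1 : b1 = z1 - a1 := by rw [hz1]; ring
  have hb2 : b2 = z2 - a2 := by rw [hz2]; ring
  have hb3 : b3 = z3 - a3 := by rw [hz3]; ring
  have hs' : s' = q0 - s := by rw [← hq0]; ring
  obtain ⟨r0, hr0⟩ : ∃ r, r = p0 - (z1 * z3 + z2 * z1 + z3 * z2) := ⟨_, rfl⟩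
  obtain ⟨r1, hr1⟩ : ∃ r, r = p1 - (z1 * (z1 * z3) + z2 * (z2 * z1) + z3 * (z3 * z2)) := ⟨_, rfl⟩
  obtain ⟨r2, hr2⟩ : ∃ r, r = p2 - (z1 * (z1 * (z1 * z3)) + z2 * (z2 * (z2 * z1))
    + z3 * (z3 * (z3 * z2))) := ⟨_, rfl⟩
  have hm0 : r0 ∈ E' := by
    rw [hr0]
    repeat first
      | assumption | apply add_mem | apply sub_mem | apply mul_mem
  have hm1 : r1 ∈ E' := by
    rw [hr1]
    repeat first
      | assumption | apply add_mem | apply sub_mem | apply mul_mem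
  have hm2 : r2 ∈ E' := by
    rw [hr2]
    repeat first
      | assumption | apply add_mem | apply sub_mem | apply mul_mem
  have ha1 : a1 ∈ E' := by
    have : a1 = (r2 - (z2 + z3) * r1 + z2 * z3 * r0) / ((z2 - z3) * ((z1 - z2) * (z1 - z3))) := by
      rw [eq_div_iff (mul_ne_zero d23 (mul_ne_zero d12 d13)), hr0, hr1, hr2, ← hp0, ← hp1, ← hp2,
        hb1, hb2, hb3]
      ring
    rw [this]
    repeat first
      | assumption | apply div_mem | apply add_mem | apply sub_mem | apply mul_mem
  have ha2 : a2 ∈ E' := by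
    have : a2 = (r2 - (z1 + z3) * r1 + z1 * z3 * r0) / ((z1 - z3) * ((z1 - z2) * (z2 - z3))) := by
      rw [eq_div_iff (mul_ne_zero d13 (mul_ne_zero d12 d23)), hr0, hr1, hr2, ← hp0, ← hp1, ← hp2,
        hb1, hb2, hb3]
      ring
    rw [this]
    repeat first
      | assumption | apply div_mem | apply add_mem | apply sub_mem | apply mul_mem
  have ha3 : a3 ∈ E' := by
    have : a3 = (r2 - (z1 + z2) * r1 + z1 * z2 * r0) / ((z1 - z2) * ((z1 - z3) * (z2 - z3))) := by
      rw [eq_div_iff (mul_ne_zero d12 (mul_ne_zero d13 d23)), hr0, hr1, hr2, ← hp0, ← hp1, ← hp2,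
        hb1, hb2, hb3]
      ring
    rw [this]
    repeat first
      | assumption | apply div_mem | apply add_mem | apply sub_mem | apply mul_mem
  have hs : s ∈ E' := by
    have : s = (q1 - (z1 * z1 * z3 + z3 * z3 * z2 + z2 * z2 * z1) * q0)
        / ((z1 - z2) * ((z1 - z3) * (z2 - z3))) := by
      rw [eq_div_iff (mul_ne_zero d12 (mul_ne_zero d13 d23)), ← hq1, ← hq0]
      ring
    rw [this]
    repeat first
      | assumption | apply div_mem | apply add_mem | apply sub_mem | apply mul_mem
  refine h E' hFE ha1 ha2 ha3 ?_ ?_ ?_ hs ?_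
  · rw [hb1]; exact sub_mem hE1 ha1
  · rw [hb2]; exact sub_mem hE2 ha2
  · rw [hb3]; exact sub_mem hE3 ha3
  · rw [hs']; exact sub_mem t6 hs

/-! ### The invariants of `G₃₄` -/

/-- The eight generators of the fixed field, as functions of the variables. -/
def tG {L : Type} [Field L] (x : Fin 8 → L) : Fin 8 → L :=
  tS (vf (x 0) (x 1) (x 2) (x 3)) (vf (x 0) (x 2) (x 1) (x 3)) (vf (x 0) (x 3) (x 1) (x 2))
    (vf (x 4) (x 5) (x 6) (x 7)) (vf (x 4) (x 6) (x 5) (x 7)) (vf (x 4) (x 7) (x 5) (x 6))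
    (x 0 + x 1 + x 2 + x 3) (x 4 + x 5 + x 6 + x 7)

/-- First generator. -/
abbrev g1 : Equiv.Perm (Fin 8) := Equiv.swap (0 : Fin 8) 1 * Equiv.swap 2 3
/-- Second generator. -/
abbrev g2 : Equiv.Perm (Fin 8) :=
  (Equiv.swap (1 : Fin 8) 2 * Equiv.swap 2 3) * (Equiv.swap (5 : Fin 8) 6 * Equiv.swap 6 7)
/-- Third generator. -/
abbrev g3 : Equiv.Perm (Fin 8) :=
  Equiv.swap (0 : Fin 8) 4 * Equiv.swap 1 5 * Equiv.swap 2 7 * Equiv.swap 3 6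

lemma g1_eq : (g1 : Fin 8 → Fin 8) = ![1, 0, 3, 2, 4, 5, 6, 7] := by decide
lemma g2_eq : (g2 : Fin 8 → Fin 8) = ![0, 2, 3, 1, 4, 6, 7, 5] := by decide
lemma g3_eq : (g3 : Fin 8 → Fin 8) = ![4, 5, 7, 6, 0, 1, 3, 2] := by decide

lemma tG_g1 {L : Type} [Field L] (x : Fin 8 → L) : tG (x ∘ g1) = tG x := by
  rw [g1_eq]
  simp only [tG, Function.comp, Matrix.cons_val]
  congr 1
  · rw [vf_left, vf_right]
  · rw [vf_swap]
  · rw [vf_swap, vf_left, vf_right]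
  · ring

lemma tG_g2 {L : Type} [Field L] (x : Fin 8 → L) : tG (x ∘ g2) = tG x := by
  rw [g2_eq]
  simp only [tG, Function.comp, Matrix.cons_val]
  rw [← tS_cyc (vf (x 0) (x 1) (x 2) (x 3))]
  congr 1
  · rw [vf_right]
  · rw [vf_right]
  · rw [vf_right]
  · rw [vf_right]
  · ring
  · ring

lemma tG_g3 {L : Type} [Field L] (x : Fin 8 → L) : tG (x ∘ g3) = tG x := by
  rw [g3_eq]
  simp only [tG, Function.comp, Matrix.cons_val]
  rw [← tS_flip (vf (x 0) (x 1) (x 2) (x 3))]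
  congr 1
  · rw [vf_right]
  · rw [vf_right]
  · ring
  · ring

lemma tG_inv {L : Type} [Field L] (σ : Equiv.Perm (Fin 8))
    (hσ : σ ∈ Subgroup.closure {g1, g2, g3}) : ∀ x : Fin 8 → L, tG (x ∘ σ) = tG x := by
  induction hσ using Subgroup.closure_induction with
  | mem σ h =>
    intro x
    simp only [Set.mem_insert_iff, Set.mem_singleton_iff] at h
    rcases h with rfl | rfl | rfl
    · exact tG_g1 x
    · exact tG_g2 x
    · exact tG_g3 x
  | one => intro x; rfl
  | mul σ τ _ _ h1 h2 =>
    intro x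
    rw [Equiv.Perm.coe_mul, ← Function.comp_assoc, h2, h1]
  | inv σ _ h =>
    intro x
    rw [← h, Function.comp_assoc, ← Equiv.Perm.coe_mul, inv_mul_cancel]
    rfl

lemma map_vf {L : Type} [Field L] (f : L →+* L) (a b c d : L) :
    f (vf a b c d) = vf (f a) (f b) (f c) (f d) := by
  simp [vf]

lemma map_tG {L : Type} [Field L] (f : L →+* L) (x : Fin 8 → L) (i : Fin 8) :
    f (tG x i) = tG (fun j => f (x j)) i := by
  simp only [tG, ← map_vf, ← map_add]
  fin_cases i <;> simp [tS]

lemma permHom_X (K : Type) [Field K] (I : Type) (σ : Equiv.Perm I) (i : I) :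
    permHom K I σ (Xvar K I i) = Xvar K I (σ i) := by
  simp [permHom, Xvar, renameHom]

lemma Xvar_injective (K : Type) [Field K] (I : Type) : Function.Injective (Xvar K I) := by
  intro i j h
  exact MvPolynomial.X_injective (IsFractionRing.injective (MvPolynomial I K) (RFF K I) h)

lemma permHom_injective (K : Type) [Field K] (I : Type) : Function.Injective (permHom K I) := by
  intro σ τ h
  ext i
  apply Xvar_injective K I
  rw [← permHom_X, ← permHom_X, h]

lemma lin_ne (K : Type) [Field K] (I : Type) (i j k l : I) (hj : i ≠ j) (hk : i ≠ k) (hl : i ≠ l) :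
    Xvar K I i + Xvar K I j - Xvar K I k - Xvar K I l ≠ 0 := by
  classical
  unfold Xvar
  rw [← map_add, ← map_sub, ← map_sub]
  intro h
  rw [map_eq_zero_iff _ (IsFractionRing.injective (MvPolynomial I K) (RFF K I))] at h
  have := congrArg (MvPolynomial.eval (fun t => if t = i then (1 : K) else 0)) h
  simp [hj.symm, hk.symm, hl.symm] at this

lemma adjoin_X (K : Type) [Field K] (I : Type) (E : IntermediateField K (RFF K I))
    (h : ∀ i, Xvar K I i ∈ E) : E = ⊤ := by
  rw [eq_top_iff]
  intro y _
  have hp : ∀ p : MvPolynomial I K, algebraMap (MvPolynomial I K) (RFF K I) p ∈ E := by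
    intro p
    induction p using MvPolynomial.induction_on with
    | C a =>
      have : algebraMap (MvPolynomial I K) (RFF K I) (MvPolynomial.C a)
          = algebraMap K (RFF K I) a := by
        rw [← MvPolynomial.algebraMap_eq, ← IsScalarTower.algebraMap_apply]
      rw [this]
      exact E.algebraMap_mem a
    | add p q hp hq => rw [map_add]; exact add_mem hp hq
    | mul_X p i hp => rw [map_mul]; exact mul_mem hp (h i)
  obtain ⟨a, b, _, rfl⟩ := IsFractionRing.div_surjective (A := MvPolynomial I K) y
  exact div_mem (hp a) (hp b)

lemma deg_main (K : Type) [Field K] (F : IntermediateField K (RFF K (Fin 8)))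
    (hF : ∀ i, tG (Xvar K (Fin 8)) i ∈ F) : DegLE F 96 := by
  have hi := Xvar_injective K (Fin 8)
  have hz : ∀ i j k l : Fin 8, i ≠ j → i ≠ k → i ≠ l → _ := lin_ne K (Fin 8)
  have key := fun σ : Equiv.Perm (Fin 8) => permHom_X K (Fin 8) σ
  have hne : ∀ a b c d : Fin 8, a ≠ b → a ≠ c → a ≠ d → c ≠ d →
      vf (Xvar K (Fin 8) a) (Xvar K _ c) (Xvar K _ b) (Xvar K _ d)
        ≠ vf (Xvar K (Fin 8) a) (Xvar K _ d) (Xvar K _ b) (Xvar K _ c) := by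
    intro a b c d hab hac had hcd
    exact vf_ne _ _ _ _ (hz _ _ _ _ hab hac had) (hz _ _ _ _ hac hab had) (hz _ _ _ _ had hab hac)
      (hi.ne hab) (hi.ne hcd)
  have hmap : ∀ (σ : Equiv.Perm (Fin 8)) (a b c d : Fin 8), permHom K (Fin 8) σ
      (vf (Xvar K (Fin 8) a) (Xvar K _ b) (Xvar K _ c) (Xvar K _ d)) =
      vf (Xvar K (Fin 8) (σ a)) (Xvar K _ (σ b)) (Xvar K _ (σ c)) (Xvar K _ (σ d)) := by
    intro σ a b c d
    simp [vf, key]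
  have e01 : (Equiv.swap (0 : Fin 8) 1 : Fin 8 → Fin 8) = ![1, 0, 2, 3, 4, 5, 6, 7] := by decide
  have e02 : (Equiv.swap (0 : Fin 8) 2 : Fin 8 → Fin 8) = ![2, 1, 0, 3, 4, 5, 6, 7] := by decide
  have n23 := hne 0 1 2 3 (by decide) (by decide) (by decide) (by decide)
  have n13 := hne 0 2 1 3 (by decide) (by decide) (by decide) (by decide)
  rw [vf_right (Xvar K (Fin 8) 0) (Xvar K _ 3) (Xvar K _ 2)] at n13
  refine tS_step F _ _ _ _ _ _ _ _ hF ?_ ?_ ?_ (4 * (4 * 1)) ?_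
  · intro h
    have h' := congrArg (permHom K (Fin 8) (Equiv.swap (0 : Fin 8) 1)) h
    simp only [map_add, hmap, e01, Matrix.cons_val] at h'
    rw [vf_left (Xvar K (Fin 8) 1) (Xvar K _ 0), vf_swap (Xvar K (Fin 8) 1) (Xvar K _ 2),
      h] at h'
    exact n23 (add_right_cancel h')
  · intro h
    have h' := congrArg (permHom K (Fin 8) (Equiv.swap (0 : Fin 8) 1)) h
    simp only [map_add, hmap, e01, Matrix.cons_val] at h'
    rw [vf_left (Xvar K (Fin 8) 1) (Xvar K _ 0), vf_swap (Xvar K (Fin 8) 1) (Xvar K _ 3),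
      h] at h'
    exact n23.symm (add_right_cancel h')
  · intro h
    have h' := congrArg (permHom K (Fin 8) (Equiv.swap (0 : Fin 8) 2)) h
    simp only [map_add, hmap, e02, Matrix.cons_val] at h'
    rw [vf_left (Xvar K (Fin 8) 2) (Xvar K _ 0), vf_swap (Xvar K (Fin 8) 2) (Xvar K _ 3),
      vf_left (Xvar K (Fin 8) 1) (Xvar K _ 0), h] at h'
    exact n13.symm (add_right_cancel h')
  · intro E hFE v1 v2 v3 w1 w2 w3 hs hs'
    refine block_step E _ _ _ _ (hz _ _ _ _ ?_ ?_ ?_) (hz _ _ _ _ ?_ ?_ ?_) (hz _ _ _ _ ?_ ?_ ?_)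
      (hi.ne ?_) (hi.ne ?_) (hi.ne ?_) hs v1 v2 v3 _ ?_
    iterate 12 decide
    intro E' hEE x0 x1 x2 x3
    refine block_step E' _ _ _ _ (hz _ _ _ _ ?_ ?_ ?_) (hz _ _ _ _ ?_ ?_ ?_) (hz _ _ _ _ ?_ ?_ ?_)
      (hi.ne ?_) (hi.ne ?_) (hi.ne ?_) (hEE hs') (hEE w1) (hEE w2) (hEE w3) _ ?_
    iterate 12 decide
    intro E'' hE'' x4 x5 x6 x7
    apply degLE_top
    apply adjoin_X
    intro i
    fin_cases i
    · exact hE'' x0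
    · exact hE'' x1
    · exact hE'' x2
    · exact hE'' x3
    · exact x4
    · exact x5
    · exact x6
    · exact x7

/-! ### The group has at least 96 elements -/

/-- A list of elements of the group. -/
def elt (p : (Fin 2 × Fin 2) × (Fin 2 × Fin 2) × (Fin 3 × Fin 2)) : Equiv.Perm (Fin 8) :=
  g1 ^ p.1.1.val * (g2 * g1 * g2⁻¹) ^ p.1.2.val * (g3 * g1 * g3⁻¹) ^ p.2.1.1.val
    * (g3 * (g2 * g1 * g2⁻¹) * g3⁻¹) ^ p.2.1.2.val * g2 ^ p.2.2.1.val * g3 ^ p.2.2.2.val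

lemma elt_mem (p) : elt p ∈ Subgroup.closure {g1, g2, g3} := by
  have h1 : g1 ∈ Subgroup.closure {g1, g2, g3} := Subgroup.subset_closure (by simp)
  have h2 : g2 ∈ Subgroup.closure {g1, g2, g3} := Subgroup.subset_closure (by simp)
  have h3 : g3 ∈ Subgroup.closure {g1, g2, g3} := Subgroup.subset_closure (by simp)
  unfold elt
  generalize g1 = a at *
  generalize g2 = b at *
  generalize g3 = c at *
  repeat first
    | assumption | apply mul_mem | apply pow_mem | apply inv_mem

/-- A numerical code of a permutation. -/
def code (σ : Equiv.Perm (Fin 8)) : ℕ := (σ 0).val + 8 * (σ 1).val + 64 * (σ 4).val + 512 * (σ 5).val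

lemma elt_injective : Function.Injective elt := by
  have : Function.Injective (code ∘ elt) := by decide +kernel
  exact this.of_comp

lemma card_G : 96 ≤ Nat.card (Subgroup.closure {g1, g2, g3}) := by
  have : Function.Injective (fun p => (⟨elt p, elt_mem p⟩ : Subgroup.closure {g1, g2, g3})) := by
    intro p q h
    exact elt_injective (congrArg Subtype.val h)
  have := Nat.card_le_card_of_injective _ this
  simpa [Nat.card_eq_fintype_card] using this

lemma finrank_fixed (K : Type) [Field K] (G : Subgroup (Equiv.Perm (Fin 8))) :
    Module.finrank (fixedSub K (Fin 8) G) (RFF K (Fin 8)) = Nat.card G := by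
  classical
  have hfin : Finite (G.map (permHom K (Fin 8))) :=
    Finite.of_equiv G (G.equivMapOfInjective _ (permHom_injective K (Fin 8))).toEquiv
  have := Fintype.ofFinite (G.map (permHom K (Fin 8)))
  rw [Nat.card_congr (G.equivMapOfInjective _ (permHom_injective K (Fin 8))).toEquiv,
    Nat.card_eq_fintype_card]
  exact FixedPoints.finrank_eq_card (G.map (permHom K (Fin 8))) (RFF K (Fin 8))

/-- **Rationality for `G₃₄`.** For any field `K`, the subgroup `G₃₄ ⊆ S₈` of order 96 generated by `(1,2)(3,4)`, `φ̃₁ = (2,3,4)(6,7,8)` and `κ̃ = (1,5)(2,6)(3,8)(4,7)` has `K`-rational fixed field. -/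
theorem rationality_G34 (K : Type) [Field K] :
    IsRatExt K ↥(fixedSub K (Fin 8) (Subgroup.closure
      {Equiv.swap (0 : Fin 8) 1 * Equiv.swap 2 3,
       (Equiv.swap (1 : Fin 8) 2 * Equiv.swap 2 3) * (Equiv.swap (5 : Fin 8) 6 * Equiv.swap 6 7),
       Equiv.swap (0 : Fin 8) 4 * Equiv.swap 1 5 * Equiv.swap 2 7 * Equiv.swap 3 6})) := by
  
  change IsRatExt K ↥(fixedSub K (Fin 8) (Subgroup.closure {g1, g2, g3}))
  have hfix : ∀ i, tG (Xvar K (Fin 8)) i ∈ fixedSub K (Fin 8) (Subgroup.closure {g1, g2, g3}) := by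
    intro i
    rw [fixedSub, IntermediateField.mem_fixedField_iff]
    rintro _ ⟨σ, hσ, rfl⟩
    have h := map_tG (permHom K (Fin 8) σ : RFF K (Fin 8) →+* RFF K (Fin 8)) (Xvar K (Fin 8)) i
    refine h.trans ?_
    rw [← tG_inv σ hσ (Xvar K (Fin 8))]
    congr 1
    funext j
    exact permHom_X K (Fin 8) σ j
  obtain ⟨F, hFdef⟩ : ∃ F, F = IntermediateField.adjoin K (Set.range (tG (Xvar K (Fin 8)))) :=
    ⟨_, rfl⟩
  have hdeg : DegLE F 96 := deg_main K F (fun i => by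
    rw [hFdef]; exact IntermediateField.subset_adjoin _ _ ⟨i, rfl⟩)
  have hFle : F ≤ fixedSub K (Fin 8) (Subgroup.closure {g1, g2, g3}) := by
    rw [hFdef, IntermediateField.adjoin_le_iff]
    rintro _ ⟨i, rfl⟩
    exact hfix i
  obtain ⟨hfd, hle⟩ := hdeg
  have hEq : F = fixedSub K (Fin 8) (Subgroup.closure {g1, g2, g3}) := by
    apply IntermediateField.eq_of_le_of_finrank_le' hFle
    rw [finrank_fixed]
    exact hle.trans card_G
  open scoped IntermediateField.algebraAdjoinAdjoin in
  have halg : AlgebraicIndependent K (tG (Xvar K (Fin 8))) := by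
    have h1 : Algebra.IsAlgebraic F (RFF K (Fin 8)) := inferInstance
    have h2 : Algebra.IsAlgebraic (Algebra.adjoin K (Set.range (tG (Xvar K (Fin 8)))))
        (RFF K (Fin 8)) := by
      subst hFdef
      exact (IsFractionRing.comap_isAlgebraic_iff (A := Algebra.adjoin K (Set.range (tG (Xvar K (Fin 8))))) (K := IntermediateField.adjoin K (Set.range (tG (Xvar K (Fin 8)))))).2 h1
    have hT : Cardinal.mk (Fin 8) ≤ Algebra.trdeg K (RFF K (Fin 8)) := by
      have : AlgebraicIndependent K (Xvar K (Fin 8)) :=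
        (MvPolynomial.algebraicIndependent_X (Fin 8) K).map'
          (f := IsScalarTower.toAlgHom K (MvPolynomial (Fin 8) K) (RFF K (Fin 8)))
          (IsFractionRing.injective (MvPolynomial (Fin 8) K) (RFF K (Fin 8)))
      exact this.cardinalMk_le_trdeg
    exact (Algebra.IsAlgebraic.isTranscendenceBasis_of_le_trdeg_of_finite K _ hT).1
  refine ⟨8, fun i => ⟨tG (Xvar K (Fin 8)) i, hfix i⟩, ?_, ?_⟩
  · exact ((fixedSub K (Fin 8) (Subgroup.closure {g1, g2, g3})).val.algebraicIndependent_iff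
      Subtype.val_injective).1 halg
  · apply IntermediateField.lift_injective
    rw [IntermediateField.lift_adjoin, IntermediateField.lift_top, ← Set.range_comp]
    exact hFdef.symm.trans hEq
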